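/- arXiv:math/0702117 — 2 statements merged into one kernel-verified Lean document; each statement's English description precedes it below -/
import Mathlib

section
/- Let G be a hyperbolic group which is torsion-free (every nontrivial element has infinite order), nontrivial, and not elementary, i.e. not virtually cyclic. Then the center Z(G) of G is trivial. -/
/-- The word metric on a group `G` with respect to a generating set `S`:
`wordDist S g h` is the least length of a word in `S ∪ S⁻¹` representing `g⁻¹ * h`. -/
noncomputable def wordDist {G : Type*} [Group G] (S : Set G) (g h : G) : ℝ :=
  sInf {r : ℝ | ∃ l : List G, (∀ x ∈ l, x ∈ S ∨ x⁻¹ ∈ S) ∧ l.prod = g⁻¹ * h ∧ r = l.length}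

/-- The Gromov product `(x|y)_w` with respect to the word metric for `S`. -/
noncomputable def gromovProd {G : Type*} [Group G] (S : Set G) (w x y : G) : ℝ :=
  (wordDist S x w + wordDist S y w - wordDist S x y) / 2

/-- A group is (Gromov) hyperbolic if it admits a finite generating set `S` such that
the word metric `d_S` satisfies the Gromov product four-point condition for some `δ ≥ 0`. -/
def IsHyperbolicGroup (G : Type*) [Group G] : Prop :=
  ∃ S : Set G, S.Finite ∧ Subgroup.closure S = ⊤ ∧
    ∃ δ : ℝ, 0 ≤ δ ∧ ∀ w x y z : G,
      gromovProd S w x y ≥ min (gromovProd S w x z) (gromovProd S w y z) - δ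

/-!
Right multiplication by a central element `u` is an isometry `T` of the word metric that moves
every point by the same distance `L = |u|`. Suppose `L` is large compared with `δ`, let `x` be a
point of a `T`-orbit closest to `o`, and suppose `L < d(o, x)`. The four-point inequality for
`o, T o, x, T x` gives `d(o, T x) + d(o, T⁻¹ x) ≤ 2 d(o, x) + 2δ`, and the one for
`o, T⁻¹ x, x, T x` then gives `d(T⁻¹ x, T x) ≤ L + 4δ`: the orbit nearly backtracks. But then `T`
moves a midpoint of `T⁻¹ x` and `x` by `O(δ)` only, a contradiction. So every `T`-orbit meets the
ball of radius `L` about `o`. Since balls are finite, an infinite center contains such a `u`, and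
every coset of `⟨u⟩` meets a fixed finite ball, so `⟨u⟩` has finite index.
-/

/-- Gromov hyperbolicity of a metric space with constant `δ`, in the form of the four-point
inequality; it is the inequality between Gromov products based at `w` with the distances to
`w` collected on both sides. -/
def IsGromovHyperbolic (X : Type*) [PseudoMetricSpace X] (δ : ℝ) : Prop :=
  ∀ w x y z : X,
    dist x y + dist z w ≤ max (dist x z + dist y w) (dist y z + dist x w) + 2 * δ

/-- Any two points have a midpoint up to an additive error `ε`. This replaces geodesics in a
discrete space such as a group with a word metric. -/
def HasApproxMidpoints (X : Type*) [PseudoMetricSpace X] (ε : ℝ) : Prop :=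
  ∀ x y : X, ∃ m : X, dist x m ≤ dist x y / 2 + ε ∧ dist m y ≤ dist x y / 2 + ε

section ConstantDisplacement

variable {X : Type*} [PseudoMetricSpace X] {δ ε L η : ℝ} {T : X ≃ᵢ X} {o x : X}

lemma IsGromovHyperbolic.nonneg [Nonempty X] (hX : IsGromovHyperbolic X δ) : 0 ≤ δ := by
  obtain ⟨x⟩ := ‹Nonempty X›
  simpa using hX x x x x

lemma IsGromovHyperbolic.dist_apply_add_dist_symm_apply_le (hX : IsGromovHyperbolic X δ)
    (hT : ∀ x, dist x (T x) = L) (hx : L ≤ dist o x) :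
    dist o (T x) + dist o (T.symm x) ≤ 2 * dist o x + 2 * δ := by
  have quadrilateral := hX (T o) o (T x) x
  have hsymm : dist x (T o) = dist o (T.symm x) := by
    rw [dist_comm o, ← T.dist_eq (T.symm x), T.apply_symm_apply]
  rw [T.dist_eq, dist_comm x o, dist_comm (T x) x, hT, hT, hsymm] at quadrilateral
  have hmax : max (dist o x + dist o x) (L + L) = dist o x + dist o x :=
    max_eq_left (by linarith)
  linarith

lemma IsGromovHyperbolic.dist_symm_apply_apply_le (hX : IsGromovHyperbolic X δ)
    (hT : ∀ x, dist x (T x) = L) (hx : L ≤ dist o x) (hmin : dist o x ≤ dist o (T x))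
    (hmin_symm : dist o x ≤ dist o (T.symm x)) :
    dist (T.symm x) (T x) ≤ L + 4 * δ := by
  have hsum := hX.dist_apply_add_dist_symm_apply_le hT hx
  have hTx : dist (T.symm x) x = L := by simpa using hT (T.symm x)
  have quadrilateral := hX o (T.symm x) (T x) x
  rw [hTx, dist_comm (T x) x, hT, dist_comm x o, dist_comm _ o, dist_comm _ o] at quadrilateral
  have hmax : max (L + dist o (T x)) (L + dist o (T.symm x)) ≤ L + (dist o x + 2 * δ) :=
    max_le (by linarith) (by linarith)
  linarith

lemma IsGromovHyperbolic.displacement_le (hX : IsGromovHyperbolic X δ)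
    (hmid : HasApproxMidpoints X ε) (hT : ∀ x, dist x (T x) = L) (hη : 0 ≤ η)
    (hTT : dist x (T (T x)) ≤ L + η) : L ≤ 2 * ε + η + 4 * δ := by
  have : Nonempty X := ⟨x⟩
  have hδ := hX.nonneg
  obtain ⟨m, hxm, hmT⟩ := hmid x (T x)
  rw [hT] at hxm hmT
  have hmTT : dist m (T (T x)) ≤ L / 2 + ε + η + 2 * δ := by
    have quadrilateral := hX (T x) m (T (T x)) x
    rw [hT, dist_comm m x, dist_comm _ (T x), hT, dist_comm _ x] at quadrilateral
    have hmax : max (dist x m + L) (dist x (T (T x)) + dist m (T x)) ≤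
        L + (L / 2 + ε + η) := max_le (by linarith) (by linarith)
    linarith
  have quadrilateral := hX (T (T x)) m (T m) (T x)
  rw [hT, hT, T.dist_eq, T.dist_eq, dist_comm m x] at quadrilateral
  have hmax : max (dist m (T x) + dist m (T x)) (dist x m + dist m (T (T x))) ≤
      L + 2 * ε + η + 2 * δ := max_le (by linarith) (by linarith)
  linarith

lemma IsGromovHyperbolic.dist_le_displacement (hX : IsGromovHyperbolic X δ)
    (hmid : HasApproxMidpoints X ε) (hT : ∀ x, dist x (T x) = L) (hL : 2 * ε + 8 * δ < L)
    (hmin : dist o x ≤ dist o (T x)) (hmin_symm : dist o x ≤ dist o (T.symm x)) :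
    dist o x ≤ L := by
  by_contra! hx
  have : Nonempty X := ⟨x⟩
  have hδ := hX.nonneg
  have hTT : dist (T.symm x) (T (T (T.symm x))) ≤ L + 4 * δ := by
    simpa using hX.dist_symm_apply_apply_le hT hx.le hmin hmin_symm
  linarith [hX.displacement_le hmid hT (by linarith) hTT]

lemma exists_mem_forall_dist_le_of_finite_closedBall {s : Set X} (hs : s.Nonempty)
    (hfin : ∀ r, (Metric.closedBall o r).Finite) : ∃ x ∈ s, ∀ y ∈ s, dist o x ≤ dist o y := by
  obtain ⟨a, ha⟩ := hs
  obtain ⟨x, ⟨hxs, hxa⟩, hx⟩ := Set.exists_min_image (s ∩ Metric.closedBall o (dist a o))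
    (dist o) ((hfin _).inter_of_right s) ⟨a, ha, Metric.mem_closedBall.mpr le_rfl⟩
  refine ⟨x, hxs, fun y hy ↦ ?_⟩
  by_cases hya : dist y o ≤ dist a o
  · exact hx y ⟨hy, hya⟩
  · rw [dist_comm o, dist_comm o]
    exact hxa.trans (not_le.mp hya).le

theorem IsGromovHyperbolic.exists_mem_dist_le_displacement (hX : IsGromovHyperbolic X δ)
    (hmid : HasApproxMidpoints X ε) (hfin : ∀ r, (Metric.closedBall o r).Finite)
    (hT : ∀ x, dist x (T x) = L) (hL : 2 * ε + 8 * δ < L) {s : Set X} (hs : s.Nonempty)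
    (hTs : Set.MapsTo T s s) (hTs_symm : Set.MapsTo T.symm s s) : ∃ x ∈ s, dist o x ≤ L := by
  obtain ⟨x, hxs, hx⟩ := exists_mem_forall_dist_le_of_finite_closedBall hs hfin
  exact ⟨x, hxs, hX.dist_le_displacement hmid hT hL (hx _ (hTs hxs)) (hx _ (hTs_symm hxs))⟩

end ConstantDisplacement

section LeftInvariantMetric

variable {G : Type*} [Group G] [PseudoMetricSpace G] [IsIsometricSMul G G] {δ ε : ℝ} {u : G}

lemma dist_self_mul_eq_dist_one (g u : G) : dist g (g * u) = dist 1 u := by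
  simpa using dist_mul_left g 1 u

lemma dist_mul_right_of_mem_center (hu : u ∈ Subgroup.center G) (g h : G) :
    dist (g * u) (h * u) = dist g h := by
  rw [Subgroup.mem_center_iff.mp hu g, Subgroup.mem_center_iff.mp hu h, dist_mul_left]

theorem IsGromovHyperbolic.finiteIndex_zpowers_of_mem_center (hG : IsGromovHyperbolic G δ)
    (hmid : HasApproxMidpoints G ε) (hfin : ∀ r, (Metric.closedBall (1 : G) r).Finite)
    (hu : u ∈ Subgroup.center G) (hlong : 2 * ε + 8 * δ < dist 1 u) :
    (Subgroup.zpowers u).FiniteIndex := by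
  let T : G ≃ᵢ G := ⟨Equiv.mulRight u, .of_dist_eq (dist_mul_right_of_mem_center hu)⟩
  have hu_mem := Subgroup.mem_zpowers u
  have hcoset (q : G ⧸ Subgroup.zpowers u) :
      ∃ g ∈ QuotientGroup.mk ⁻¹' {q}, dist 1 g ≤ dist 1 u :=
    hG.exists_mem_dist_le_displacement hmid hfin (T := T)
      (dist_self_mul_eq_dist_one · u) hlong (QuotientGroup.mk_surjective q)
      (fun g hg ↦ (QuotientGroup.mk_mul_of_mem g hu_mem).trans hg)
      (fun g hg ↦ (QuotientGroup.mk_mul_of_mem g (inv_mem hu_mem)).trans hg)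
  have hcover : QuotientGroup.mk '' Metric.closedBall (1 : G) (dist 1 u) =
      (Set.univ : Set (G ⧸ Subgroup.zpowers u)) := by
    refine Set.eq_univ_of_forall fun q ↦ ?_
    obtain ⟨g, hgq, hg⟩ := hcoset q
    exact ⟨g, Metric.mem_closedBall'.mpr hg, hgq⟩
  have : Finite (G ⧸ Subgroup.zpowers u) :=
    Set.finite_univ_iff.mp (hcover ▸ (hfin _).image _)
  exact Subgroup.finiteIndex_of_finite_quotient

theorem IsGromovHyperbolic.finite_center_of_not_virtually_cyclic (hG : IsGromovHyperbolic G δ)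
    (hmid : HasApproxMidpoints G ε) (hfin : ∀ r, (Metric.closedBall (1 : G) r).Finite)
    (hne : ¬ ∃ H : Subgroup G, H.FiniteIndex ∧ IsCyclic H) : Finite (Subgroup.center G) := by
  refine ((hfin (2 * ε + 8 * δ)).subset fun u hu ↦ ?_).to_subtype
  by_contra hlong
  rw [Metric.mem_closedBall', not_le] at hlong
  exact hne ⟨_, hG.finiteIndex_zpowers_of_mem_center hmid hfin hu hlong, inferInstance⟩

end LeftInvariantMetric

section WordMetric

variable {G : Type*} [Group G] {S : Set G}

lemma wordDist_mul_left (a g h : G) : wordDist S (a * g) (a * h) = wordDist S g h := by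
  simp only [wordDist, mul_inv_rev, mul_assoc, inv_mul_cancel_left]

lemma wordDist_le_length {g h : G} {l : List G} (hl : ∀ x ∈ l, x ∈ S ∨ x⁻¹ ∈ S)
    (hprod : l.prod = g⁻¹ * h) : wordDist S g h ≤ l.length :=
  csInf_le ⟨0, by rintro _ ⟨l, -, -, rfl⟩; positivity⟩ ⟨l, hl, hprod, rfl⟩

lemma exists_word_prod_eq (hS : Subgroup.closure S = ⊤) (g : G) :
    ∃ l : List G, (∀ x ∈ l, x ∈ S ∨ x⁻¹ ∈ S) ∧ l.prod = g := by
  have hg : g ∈ (Subgroup.closure S).toSubmonoid := hS ▸ Subgroup.mem_top g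
  rw [Subgroup.closure_toSubmonoid] at hg
  exact Submonoid.exists_list_of_mem_closure hg

lemma exists_word_length_eq_wordDist (hS : Subgroup.closure S = ⊤) (g h : G) :
    ∃ l : List G, (∀ x ∈ l, x ∈ S ∨ x⁻¹ ∈ S) ∧ l.prod = g⁻¹ * h ∧
      wordDist S g h = l.length := by
  classical
  have hword : ∃ n : ℕ, ∃ l : List G,
      (∀ x ∈ l, x ∈ S ∨ x⁻¹ ∈ S) ∧ l.prod = g⁻¹ * h ∧ l.length = n := by
    obtain ⟨l, hl, hprod⟩ := exists_word_prod_eq hS (g⁻¹ * h)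
    exact ⟨l.length, l, hl, hprod, rfl⟩
  obtain ⟨l, hl, hprod, hlen⟩ := Nat.find_spec hword
  refine ⟨l, hl, hprod, IsLeast.csInf_eq ⟨⟨l, hl, hprod, rfl⟩, ?_⟩⟩
  rintro _ ⟨l', hl', hprod', rfl⟩
  exact_mod_cast hlen.trans_le (Nat.find_min' hword ⟨l', hl', hprod', rfl⟩)

lemma wordDist_self (g : G) : wordDist S g g = 0 := by
  refine le_antisymm ?_ (Real.sInf_nonneg ?_)
  · simpa using wordDist_le_length (S := S) (g := g) (h := g) (l := []) (by simp) (by simp)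
  · rintro _ ⟨l, -, -, rfl⟩
    positivity

lemma wordDist_swap_le (hS : Subgroup.closure S = ⊤) (g h : G) :
    wordDist S g h ≤ wordDist S h g := by
  obtain ⟨l, hl, hprod, hlen⟩ := exists_word_length_eq_wordDist hS h g
  have hletters : ∀ x ∈ (l.map (·⁻¹)).reverse, x ∈ S ∨ x⁻¹ ∈ S := by
    simpa [or_comm] using fun x hx ↦ hl x⁻¹ hx
  have hinv : (l.map (·⁻¹)).reverse.prod = g⁻¹ * h := by
    rw [← List.prod_inv_reverse, hprod, mul_inv_rev, inv_inv]
  simpa [hlen] using wordDist_le_length hletters hinv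

lemma wordDist_comm (hS : Subgroup.closure S = ⊤) (g h : G) :
    wordDist S g h = wordDist S h g :=
  (wordDist_swap_le hS g h).antisymm (wordDist_swap_le hS h g)

lemma wordDist_triangle (hS : Subgroup.closure S = ⊤) (g h k : G) :
    wordDist S g k ≤ wordDist S g h + wordDist S h k := by
  obtain ⟨l₁, hl₁, hprod₁, hlen₁⟩ := exists_word_length_eq_wordDist hS g h
  obtain ⟨l₂, hl₂, hprod₂, hlen₂⟩ := exists_word_length_eq_wordDist hS h k
  have hprod : (l₁ ++ l₂).prod = g⁻¹ * k := by
    rw [List.prod_append, hprod₁, hprod₂]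
    group
  simpa [hlen₁, hlen₂] using
    wordDist_le_length (List.forall_mem_append.mpr ⟨hl₁, hl₂⟩) hprod

/-- A generated group as a metric space under its word metric. It is not an instance, as it
depends on the generating set. -/
noncomputable abbrev wordPseudoMetricSpace (hS : Subgroup.closure S = ⊤) :
    PseudoMetricSpace G where
  dist := wordDist S
  dist_self := wordDist_self
  dist_comm := wordDist_comm hS
  dist_triangle := wordDist_triangle hS

lemma isIsometricSMul_wordPseudoMetricSpace (hS : Subgroup.closure S = ⊤) :
    letI := wordPseudoMetricSpace hS
    IsIsometricSMul G G :=
  letI := wordPseudoMetricSpace hS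
  ⟨fun a ↦ .of_dist_eq (wordDist_mul_left a)⟩

lemma isGromovHyperbolic_wordPseudoMetricSpace (hS : Subgroup.closure S = ⊤) {δ : ℝ}
    (hδ : ∀ w x y z : G,
      gromovProd S w x y ≥ min (gromovProd S w x z) (gromovProd S w y z) - δ) :
    letI := wordPseudoMetricSpace hS
    IsGromovHyperbolic G δ := by
  intro w x y z
  change wordDist S x y + wordDist S z w ≤
    max (wordDist S x z + wordDist S y w) (wordDist S y z + wordDist S x w) + 2 * δ
  rw [← sub_le_iff_le_add, le_max_iff]
  rcases min_le_iff.mp (sub_le_iff_le_add.mp (hδ w x y z)) with h | h <;>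
    simp only [gromovProd] at h
  · left
    linarith
  · right
    linarith

lemma finite_closedBall_wordPseudoMetricSpace (hS : Subgroup.closure S = ⊤) (hfin : S.Finite)
    (g : G) (r : ℝ) :
    letI := wordPseudoMetricSpace hS
    (Metric.closedBall g r).Finite := by
  let := wordPseudoMetricSpace hS
  have : Finite {x // x ∈ S ∨ x⁻¹ ∈ S} := hfin.union hfin.inv
  refine ((List.finite_length_le {x // x ∈ S ∨ x⁻¹ ∈ S} ⌊r⌋₊).image
    fun l ↦ g * (l.map Subtype.val).prod).subset fun h hh ↦ ?_
  obtain ⟨l, hl, hprod, hlen⟩ := exists_word_length_eq_wordDist hS g h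
  have hlr : (l.length : ℝ) ≤ r := hlen ▸ Metric.mem_closedBall'.mp hh
  lift l to List {x // x ∈ S ∨ x⁻¹ ∈ S} using hl
  exact ⟨l, by simpa using Nat.le_floor hlr, by simp only [hprod, mul_inv_cancel_left]⟩

lemma hasApproxMidpoints_wordPseudoMetricSpace (hS : Subgroup.closure S = ⊤) :
    letI := wordPseudoMetricSpace hS
    HasApproxMidpoints G (1 / 2) := by
  intro g h
  obtain ⟨l, hl, hprod, hlen⟩ := exists_word_length_eq_wordDist hS g h
  let n := l.length / 2
  have hsplit : (l.take n).prod * (l.drop n).prod = g⁻¹ * h := by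
    rw [List.prod_take_mul_prod_drop, hprod]
  have hleft : wordDist S g (g * (l.take n).prod) ≤ (l.take n).length :=
    wordDist_le_length (fun x hx ↦ hl x (List.mem_of_mem_take hx)) (by group)
  have hright : wordDist S (g * (l.take n).prod) h ≤ (l.drop n).length :=
    wordDist_le_length (fun x hx ↦ hl x (List.mem_of_mem_drop hx)) <| by
      rw [mul_inv_rev, mul_assoc, ← hsplit, inv_mul_cancel_left]
  have htake : 2 * ((l.take n).length : ℝ) ≤ l.length + 1 := by
    exact_mod_cast (by grind : 2 * (l.take n).length ≤ l.length + 1)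
  have hdrop : 2 * ((l.drop n).length : ℝ) ≤ l.length + 1 := by
    exact_mod_cast (by grind : 2 * (l.drop n).length ≤ l.length + 1)
  refine ⟨g * (l.take n).prod, hleft.trans ?_, hright.trans ?_⟩ <;>
    change _ ≤ wordDist S g h / 2 + 1 / 2 <;> linarith

end WordMetric

lemma eq_bot_of_finite_of_forall_zpow_ne_one {G : Type*} [Group G]
    (htf : ∀ g : G, g ≠ 1 → ∀ n : ℤ, n ≠ 0 → g ^ n ≠ 1) (H : Subgroup G) [Finite H] :
    H = ⊥ := by
  rw [Subgroup.eq_bot_iff_forall]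
  intro g hg
  have hord : IsOfFinOrder g :=
    Submonoid.isOfFinOrder_coe.mpr (isOfFinOrder_of_finite (⟨g, hg⟩ : H))
  obtain ⟨n, hn, hgn⟩ := isOfFinOrder_iff_zpow_eq_one.mp hord
  by_contra hg1
  exact htf g hg1 n hn hgn

theorem stmt_10_general {G : Type*} [Group G] (hG : IsHyperbolicGroup G)
    (hne : ¬ ∃ H : Subgroup G, H.FiniteIndex ∧ IsCyclic H) :
    Finite (Subgroup.center G) := by
  obtain ⟨S, hfin, hS, δ, -, hδ⟩ := hG
  let := wordPseudoMetricSpace hS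
  have := isIsometricSMul_wordPseudoMetricSpace hS
  exact (isGromovHyperbolic_wordPseudoMetricSpace hS hδ).finite_center_of_not_virtually_cyclic
    (hasApproxMidpoints_wordPseudoMetricSpace hS)
    (finite_closedBall_wordPseudoMetricSpace hS hfin 1) hne

/-- A torsion-free, nontrivial, non-elementary hyperbolic group has trivial center. -/
theorem stmt_10 {G : Type*} [Group G] (hG : IsHyperbolicGroup G)
    (htf : ∀ g : G, g ≠ 1 → ∀ n : ℤ, n ≠ 0 → g ^ n ≠ 1)
    (hnontriv : Nontrivial G)
    (hne : ¬ ∃ H : Subgroup G, H.FiniteIndex ∧ IsCyclic H) :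
    Subgroup.center G = ⊥ :=
  have := stmt_10_general hG hne
  eq_bot_of_finite_of_forall_zpow_ne_one htf (Subgroup.center G)
end

section
/- Let G be a hyperbolic group, let h ∈ G be an element of infinite order, and let ω ∈ G. Then ω is conjugate in G to at most two elements of the cyclic subgroup ⟨h⟩; equivalently, the set {n ∈ ℤ | ω is conjugate to h^n} has at most two elements. -/
/-!
The stable length `τ(g) = lim |gᵏ| / k` is a conjugacy invariant and satisfies `τ(gⁿ) = |n| τ(g)`.
Once `τ(h) > 0`, all exponents `n` for which `hⁿ` is conjugate to `ω` therefore have the same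
absolute value, so there are at most two of them.

That `τ(h) > 0` in a hyperbolic group is seen from the balls containing an orbit segment
`1, h, …, hᴹ`. Suppose a ball of radius `R` centred at `c` contains the longer segment of length
`M + N`. For `N` large in terms of the number of elements in a fixed ball, some `hᵏ` with `k ≤ N`
moves `c` far. The segment `hᵏ, …, hᵏ⁺ᴹ` lies within `R` of both `c` and `hᵏc`, so by hyperbolicity
it lies within `R - 1` of their midpoint. Translating by `h⁻ᵏ`, the first segment lies in a ball of
radius `R - 1`. Hence segments of length `jN` need radius at least `j`, and the orbit escapes
linearly.
-/

open Filter Topology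
open scoped Pointwise

section StableLength

variable {G : Type*} [Group G] (f : GroupSeminorm G) (g : G)

theorem subadditive_seminorm_pow : Subadditive fun k : ℕ ↦ f (g ^ k) := fun m n ↦ by
  simpa only [pow_add] using map_mul_le_add f (g ^ m) (g ^ n)

/-- The stable length (asymptotic translation length) of `g`: the limit of `f (g ^ k) / k`, which
exists by Fekete's lemma. -/
noncomputable def stableLength : ℝ := (subadditive_seminorm_pow f g).lim

theorem tendsto_seminorm_pow_div :
    Tendsto (fun k : ℕ ↦ f (g ^ k) / k) atTop (𝓝 (stableLength f g)) := by
  refine (subadditive_seminorm_pow f g).tendsto_lim ⟨0, ?_⟩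
  rintro _ ⟨k, rfl⟩
  positivity

theorem stableLength_inv : stableLength f g⁻¹ = stableLength f g :=
  tendsto_nhds_unique (tendsto_seminorm_pow_div f g⁻¹) <| by
    simpa only [inv_pow, map_inv_eq_map] using tendsto_seminorm_pow_div f g

theorem stableLength_pow (n : ℕ) : stableLength f (g ^ n) = n * stableLength f g := by
  rcases n.eq_zero_or_pos with rfl | hn
  · refine tendsto_nhds_unique (tendsto_seminorm_pow_div f (g ^ 0)) ?_
    simp
  · have hsubseq : Tendsto (fun k : ℕ ↦ n * (f (g ^ (n * k)) / (n * k : ℕ))) atTop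
        (𝓝 (n * stableLength f g)) :=
      ((tendsto_seminorm_pow_div f g).comp (tendsto_id.const_mul_atTop' hn)).const_mul _
    refine tendsto_nhds_unique (tendsto_seminorm_pow_div f (g ^ n)) (hsubseq.congr fun k ↦ ?_)
    rw [Nat.cast_mul, ← mul_div_assoc, mul_div_mul_left _ _ (by positivity), pow_mul]

theorem stableLength_zpow (n : ℤ) : stableLength f (g ^ n) = |n| * stableLength f g := by
  cases n using Int.negInduction with
  | nat n => simpa using stableLength_pow f g n
  | neg _ n => simpa [stableLength_inv] using stableLength_pow f g n

theorem stableLength_conj_le (u : G) : stableLength f (u * g * u⁻¹) ≤ stableLength f g := by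
  have hlim : Tendsto (fun k : ℕ ↦ f (g ^ k) / k + 2 * f u / k) atTop (𝓝 (stableLength f g)) := by
    simpa using (tendsto_seminorm_pow_div f g).add (tendsto_const_div_atTop_nhds_zero_nat (2 * f u))
  refine le_of_tendsto_of_tendsto' (tendsto_seminorm_pow_div f _) hlim fun k ↦ ?_
  rw [← add_div, conj_pow]
  gcongr
  calc f (u * g ^ k * u⁻¹) ≤ f u + f (g ^ k) + f u⁻¹ :=
        (map_mul_le_add f _ _).trans (add_le_add_left (map_mul_le_add f _ _) _)
    _ = f (g ^ k) + 2 * f u := by rw [map_inv_eq_map]; ring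

variable {f g}

theorem stableLength_eq_of_isConj {g' : G} (hconj : IsConj g g') :
    stableLength f g = stableLength f g' := by
  have hle : ∀ {a b : G}, IsConj a b → stableLength f b ≤ stableLength f a := fun {a _} hab ↦ by
    obtain ⟨u, rfl⟩ := isConj_iff.mp hab
    exact stableLength_conj_le f a u
  exact le_antisymm (hle hconj.symm) (hle hconj)

theorem abs_eq_abs_of_isConj_zpow (hpos : 0 < stableLength f g) {m n : ℤ}
    (hconj : IsConj (g ^ m) (g ^ n)) : |m| = |n| := by
  have hlength := stableLength_eq_of_isConj (f := f) hconj
  rw [stableLength_zpow, stableLength_zpow] at hlength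
  exact_mod_cast mul_right_cancel₀ hpos.ne' hlength

theorem exists_seminorm_pow_le_of_stableLength_lt {ε : ℝ} (hε : stableLength f g < ε) :
    ∃ C, ∀ k : ℕ, f (g ^ k) ≤ ε * k + C := by
  have heventually : ∀ᶠ k : ℕ in atTop, f (g ^ k) - ε * k ≤ 0 := by
    filter_upwards [(tendsto_seminorm_pow_div f g).eventually_lt_const hε,
      eventually_gt_atTop 0] with k hlt hk
    rw [div_lt_iff₀ (by positivity)] at hlt
    linarith
  obtain ⟨C, hC⟩ := (isBoundedUnder_of_eventually_le heventually).bddAbove_range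
  exact ⟨C, fun k ↦ by linarith [hC (Set.mem_range_self k)]⟩

end StableLength

section Hyperbolic

variable {G : Type*} [Group G]

/-- Gromov's four-point condition for the left-invariant distance `d x y = f (x⁻¹ * y)`, written
without Gromov products: of the three sums of distances between opposite pairs, the largest exceeds
the second largest by at most `2 * δ`. -/
def FourPointCondition (f : GroupSeminorm G) (δ : ℝ) : Prop :=
  ∀ x y z w : G, f (x⁻¹ * y) + f (z⁻¹ * w) ≤
    max (f (x⁻¹ * z) + f (y⁻¹ * w)) (f (y⁻¹ * z) + f (x⁻¹ * w)) + 2 * δ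

/-- Every two points have a midpoint up to an additive error `κ`, for the left-invariant distance
`d x y = f (x⁻¹ * y)`; by left invariance it is enough to ask this for `1` and `g`, where `a` is the
midpoint. -/
def HasCoarseMidpoints (f : GroupSeminorm G) (κ : ℝ) : Prop :=
  ∀ g : G, ∃ a b : G, a * b = g ∧ f a ≤ f g / 2 + κ ∧ f b ≤ f g / 2 + κ

/-- The orbit segment `1, g, …, g ^ M` lies in some closed ball of radius `R` for the left-invariant
distance `d x y = f (x⁻¹ * y)`. -/
def OrbitSegmentInBall (f : GroupSeminorm G) (g : G) (M : ℕ) (R : ℝ) : Prop :=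
  ∃ c : G, ∀ i ≤ M, f (c⁻¹ * g ^ i) ≤ R

variable {f : GroupSeminorm G} {g : G} {δ κ : ℝ}

theorem FourPointCondition.dist_midpoint_le (hδ : FourPointCondition f δ) {x y p w : G} {R : ℝ}
    (hxp : f (x⁻¹ * p) ≤ f (x⁻¹ * y) / 2 + κ) (hyp : f (y⁻¹ * p) ≤ f (x⁻¹ * y) / 2 + κ)
    (hxw : f (x⁻¹ * w) ≤ R) (hyw : f (y⁻¹ * w) ≤ R) :
    f (p⁻¹ * w) ≤ R + κ + 2 * δ - f (x⁻¹ * y) / 2 := by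
  have hmax := max_le (add_le_add hxp hyw) (add_le_add hyp hxw)
  linarith [hδ x y p w]

theorem exists_lt_seminorm_pow {K : ℝ} (hball : {x | f x ≤ K}.Finite) (hg : ¬IsOfFinOrder g) :
    ∃ k ≤ {x | f x ≤ K}.ncard, K < f (g ^ k) := by
  by_contra! hsmall
  have hcard := Set.le_ncard_of_inj_on_range (n := {x | f x ≤ K}.ncard + 1) (g ^ ·)
    (fun k hk ↦ hsmall k (Nat.lt_succ_iff.mp hk))
    (fun _ _ _ _ heq ↦ injective_pow_iff_not_isOfFinOrder.mpr hg heq) hball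
  exact hcard.not_gt (Nat.lt_succ_self _)

theorem exists_lt_seminorm_conj_pow {K : ℝ} (hball : {x | f x ≤ K}.Finite)
    (hg : ¬IsOfFinOrder g) (c : G) :
    ∃ k ≤ {x | f x ≤ K}.ncard, K < f (c⁻¹ * g ^ k * c) := by
  have hconj : IsConj (c⁻¹ * g * c) g := isConj_iff.mpr ⟨c, by group⟩
  obtain ⟨k, hk, hlt⟩ := exists_lt_seminorm_pow hball fun hfin ↦ hg (hconj.isOfFinOrder hfin)
  have hpow : (c⁻¹ * g * c) ^ k = c⁻¹ * g ^ k * c := by simpa using conj_pow (a := c⁻¹) (i := k)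
  exact ⟨k, hk, hpow ▸ hlt⟩

-- `2 * (κ + 2 * δ + 1)` is the displacement for which `dist_midpoint_le` gains exactly `1`.
theorem FourPointCondition.orbitSegmentInBall_sub_one (hδ : FourPointCondition f δ)
    (hκ : HasCoarseMidpoints f κ) (hball : {x | f x ≤ 2 * (κ + 2 * δ + 1)}.Finite)
    (hg : ¬IsOfFinOrder g) {M : ℕ} {R : ℝ}
    (hR : OrbitSegmentInBall f g (M + {x | f x ≤ 2 * (κ + 2 * δ + 1)}.ncard) R) :
    OrbitSegmentInBall f g M (R - 1) := by
  obtain ⟨c, hc⟩ := hR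
  obtain ⟨k, hk, hfar⟩ := exists_lt_seminorm_conj_pow hball hg c
  rw [mul_assoc] at hfar
  obtain ⟨a, b, hab, ha, hb⟩ := hκ (c⁻¹ * (g ^ k * c))
  refine ⟨(g ^ k)⁻¹ * (c * a), fun i hi ↦ ?_⟩
  have hmid_left : c⁻¹ * (c * a) = a := by group
  have hmid_right : (g ^ k * c)⁻¹ * (c * a) = b⁻¹ := by
    rw [eq_inv_iff_mul_eq_one, mul_assoc, mul_assoc, hab]
    group
  have htranslate : (g ^ k * c)⁻¹ * g ^ (k + i) = c⁻¹ * g ^ i := by rw [pow_add]; group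
  have hclose : f ((c * a)⁻¹ * g ^ (k + i)) ≤
      R + κ + 2 * δ - f (c⁻¹ * (g ^ k * c)) / 2 :=
    hδ.dist_midpoint_le (by rwa [hmid_left]) (by rwa [hmid_right, map_inv_eq_map])
      (hc _ (by omega)) (by rw [htranslate]; exact hc _ (by omega))
  have hcenter : ((g ^ k)⁻¹ * (c * a))⁻¹ * g ^ i = (c * a)⁻¹ * g ^ (k + i) := by
    rw [pow_add]; group
  rw [hcenter]
  linarith

theorem FourPointCondition.le_of_orbitSegmentInBall (hδ : FourPointCondition f δ)
    (hκ : HasCoarseMidpoints f κ) (hball : {x | f x ≤ 2 * (κ + 2 * δ + 1)}.Finite)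
    (hg : ¬IsOfFinOrder g) {j : ℕ} {R : ℝ}
    (hR : OrbitSegmentInBall f g (j * {x | f x ≤ 2 * (κ + 2 * δ + 1)}.ncard) R) : j ≤ R := by
  induction j generalizing R with
  | zero =>
    obtain ⟨c, hc⟩ := hR
    simpa using (apply_nonneg f _).trans (hc 0 (Nat.zero_le _))
  | succ j ih =>
    rw [Nat.succ_mul] at hR
    push_cast
    linarith [ih (hδ.orbitSegmentInBall_sub_one hκ hball hg hR)]

theorem FourPointCondition.stableLength_pos (hδ : FourPointCondition f δ)
    (hκ : HasCoarseMidpoints f κ) (hball : {x | f x ≤ 2 * (κ + 2 * δ + 1)}.Finite)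
    (hg : ¬IsOfFinOrder g) : 0 < stableLength f g := by
  set N := {x | f x ≤ 2 * (κ + 2 * δ + 1)}.ncard
  by_contra! hnonpos
  obtain ⟨ε, hε, hεN⟩ : ∃ ε : ℝ, 0 < ε ∧ ε * N ≤ 1 / 2 := by
    refine ⟨1 / (2 * (N + 1)), by positivity, ?_⟩
    rw [div_mul_eq_mul_div, div_le_div_iff₀ (by positivity) two_pos]
    linarith
  obtain ⟨C, hC⟩ := exists_seminorm_pow_le_of_stableLength_lt (hnonpos.trans_lt hε)
  have hlinear : ∀ j : ℕ, (j : ℝ) ≤ ε * (j * N) + C := fun j ↦ by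
    refine hδ.le_of_orbitSegmentInBall hκ hball hg ⟨1, fun i hi ↦ ?_⟩
    have hi' : (i : ℝ) ≤ j * N := by exact_mod_cast hi
    rw [inv_one, one_mul]
    exact (hC i).trans (by gcongr)
  obtain ⟨j, hj⟩ := exists_nat_gt (2 * C)
  have hhalf : ε * (j * N) ≤ j / 2 := by
    linarith [mul_le_mul_of_nonneg_left hεN (Nat.cast_nonneg (α := ℝ) j)]
  linarith [hlinear j]

end Hyperbolic

section WordLength

variable {G : Type*} [Group G] {S : Set G}

/-- The letters of the list `l` all belong to `S ∪ S⁻¹`. -/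
def IsWord (S : Set G) (l : List G) : Prop := ∀ x ∈ l, x ∈ S ∨ x⁻¹ ∈ S

theorem IsWord.append {l l' : List G} (hl : IsWord S l) (hl' : IsWord S l') :
    IsWord S (l ++ l') :=
  List.forall_mem_append.mpr ⟨hl, hl'⟩

theorem IsWord.reverse_map_inv {l : List G} (hl : IsWord S l) :
    IsWord S (l.map (·⁻¹)).reverse := by
  simpa only [IsWord, List.mem_reverse, List.forall_mem_map, inv_inv, or_comm] using hl

theorem exists_isWord_prod_eq (hS : Subgroup.closure S = ⊤) (g : G) :
    ∃ l, IsWord S l ∧ l.prod = g := by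
  have hg : g ∈ (Subgroup.closure S).toSubmonoid := by simp [hS]
  rw [Subgroup.closure_toSubmonoid] at hg
  exact Submonoid.exists_list_of_mem_closure hg

theorem finite_isWord_length_le (hfin : S.Finite) (n : ℕ) :
    {l | IsWord S l ∧ l.length ≤ n}.Finite := by
  have : Finite ↥(S ∪ S⁻¹) := (hfin.union hfin.inv).to_subtype
  refine ((List.finite_length_le ↥(S ∪ S⁻¹) n).image (List.map Subtype.val)).subset ?_
  rintro l ⟨hl, hlength⟩
  lift l to List ↥(S ∪ S⁻¹) using hl
  exact ⟨l, by simpa using hlength, rfl⟩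

theorem wordDist_eq_one_inv_mul (g h : G) : wordDist S g h = wordDist S 1 (g⁻¹ * h) := by
  simp only [wordDist, inv_one, one_mul]

theorem IsWord.wordDist_one_prod_le {l : List G} (hl : IsWord S l) :
    wordDist S 1 l.prod ≤ l.length := by
  refine csInf_le ⟨0, ?_⟩ ⟨l, hl, by simp, rfl⟩
  rintro _ ⟨l', -, -, rfl⟩
  positivity

theorem exists_isWord_length_eq_wordDist (hS : Subgroup.closure S = ⊤) (g : G) :
    ∃ l, IsWord S l ∧ l.prod = g ∧ (l.length : ℝ) = wordDist S 1 g := by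
  obtain ⟨l, ⟨hl, rfl⟩, hmin⟩ :=
    exists_minimalFor_of_wellFoundedLT _ List.length (exists_isWord_prod_eq hS g)
  refine ⟨l, hl, rfl, le_antisymm ?_ hl.wordDist_one_prod_le⟩
  refine le_csInf ⟨_, l, hl, by simp, rfl⟩ ?_
  rintro _ ⟨l', hl', hprod, rfl⟩
  rw [inv_one, one_mul] at hprod
  exact_mod_cast (le_total l.length l'.length).elim id (hmin ⟨hl', hprod⟩)

theorem wordDist_one_mul_le (hS : Subgroup.closure S = ⊤) (g h : G) :
    wordDist S 1 (g * h) ≤ wordDist S 1 g + wordDist S 1 h := by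
  obtain ⟨l, hl, rfl, hlength⟩ := exists_isWord_length_eq_wordDist hS g
  obtain ⟨l', hl', rfl, hlength'⟩ := exists_isWord_length_eq_wordDist hS h
  rw [← hlength, ← hlength', ← List.prod_append]
  exact_mod_cast List.length_append (as := l) ▸ (hl.append hl').wordDist_one_prod_le

theorem wordDist_one_inv_le (hS : Subgroup.closure S = ⊤) (g : G) :
    wordDist S 1 g⁻¹ ≤ wordDist S 1 g := by
  obtain ⟨l, hl, rfl, hlength⟩ := exists_isWord_length_eq_wordDist hS g
  rw [← hlength, List.prod_inv_reverse]
  simpa using hl.reverse_map_inv.wordDist_one_prod_le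

/-- The word length with respect to a generating set `S`, as a seminorm on the group. -/
noncomputable def wordSeminorm (hS : Subgroup.closure S = ⊤) : GroupSeminorm G where
  toFun := wordDist S 1
  map_one' := by
    obtain ⟨l, -, -, hlength⟩ := exists_isWord_length_eq_wordDist hS 1
    refine le_antisymm ?_ (hlength ▸ Nat.cast_nonneg _)
    simpa using IsWord.wordDist_one_prod_le (S := S) (l := []) (by simp [IsWord])
  mul_le' := wordDist_one_mul_le hS
  inv' g := le_antisymm (wordDist_one_inv_le hS g) (by simpa using wordDist_one_inv_le hS g⁻¹)

theorem wordSeminorm_inv_mul (hS : Subgroup.closure S = ⊤) (g h : G) :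
    wordSeminorm hS (g⁻¹ * h) = wordDist S g h :=
  (wordDist_eq_one_inv_mul g h).symm

theorem finite_wordSeminorm_le (hS : Subgroup.closure S = ⊤) (hfin : S.Finite) (r : ℝ) :
    {g | wordSeminorm hS g ≤ r}.Finite := by
  refine ((finite_isWord_length_le hfin ⌊r⌋₊).image List.prod).subset fun g hg ↦ ?_
  obtain ⟨l, hl, hprod, hlength⟩ := exists_isWord_length_eq_wordDist hS g
  exact ⟨l, ⟨hl, Nat.le_floor (hlength.trans_le hg)⟩, hprod⟩

theorem hasCoarseMidpoints_wordSeminorm (hS : Subgroup.closure S = ⊤) :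
    HasCoarseMidpoints (wordSeminorm hS) (1 / 2) := fun g ↦ by
  obtain ⟨l, hl, rfl, hlength⟩ := exists_isWord_length_eq_wordDist hS g
  have hle : ∀ l' : List G, l' ⊆ l → 2 * l'.length ≤ l.length + 1 →
      wordSeminorm hS l'.prod ≤ wordSeminorm hS l.prod / 2 + 1 / 2 := fun l' hsub hhalf ↦ by
    have hword : IsWord S l' := fun x hx ↦ hl x (hsub hx)
    have hhalf' : 2 * (l'.length : ℝ) ≤ wordSeminorm hS l.prod + 1 :=
      (by exact_mod_cast hhalf : 2 * (l'.length : ℝ) ≤ l.length + 1).trans_eq (by rw [hlength]; rfl)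
    exact hword.wordDist_one_prod_le.trans (by linarith)
  refine ⟨(l.take (l.length / 2)).prod, (l.drop (l.length / 2)).prod,
    List.prod_take_mul_prod_drop _ _, hle _ (List.take_subset _ _) ?_,
    hle _ (List.drop_subset _ _) ?_⟩
  · rw [List.length_take]
    omega
  · rw [List.length_drop]
    omega

theorem fourPointCondition_wordSeminorm (hS : Subgroup.closure S = ⊤) {δ : ℝ}
    (hδ : ∀ w x y z : G,
      gromovProd S w x y ≥ min (gromovProd S w x z) (gromovProd S w y z) - δ) :
    FourPointCondition (wordSeminorm hS) δ := fun x y z w ↦ by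
  have hprod := hδ w x y z
  simp only [wordSeminorm_inv_mul, gromovProd] at hprod ⊢
  grind

end WordLength

theorem IsHyperbolicGroup.exists_seminorm_stableLength_pos {G : Type*} [Group G]
    (hG : IsHyperbolicGroup G) :
    ∃ f : GroupSeminorm G, ∀ g, ¬IsOfFinOrder g → 0 < stableLength f g := by
  obtain ⟨S, hfin, hS, δ, -, hδ⟩ := hG
  exact ⟨wordSeminorm hS, fun _ ↦ (fourPointCondition_wordSeminorm hS hδ).stableLength_pos
    (hasCoarseMidpoints_wordSeminorm hS) (finite_wordSeminorm_le hS hfin _)⟩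

/-- In a hyperbolic group, an element `ω` is conjugate to at most two powers of an
element `h` of infinite order. -/
theorem stmt_12 {G : Type*} [Group G] (hG : IsHyperbolicGroup G)
    (h : G) (hord : ∀ n : ℤ, n ≠ 0 → h ^ n ≠ 1) (ω : G)
    (n₁ n₂ n₃ : ℤ)
    (h₁ : ∃ u : G, h ^ n₁ = u * ω * u⁻¹)
    (h₂ : ∃ u : G, h ^ n₂ = u * ω * u⁻¹)
    (h₃ : ∃ u : G, h ^ n₃ = u * ω * u⁻¹) :
    n₁ = n₂ ∨ n₁ = n₃ ∨ n₂ = n₃ := by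
  obtain ⟨f, hf⟩ := hG.exists_seminorm_stableLength_pos
  have hinf : ¬IsOfFinOrder h := fun hfin ↦ by
    obtain ⟨n, hn, hpow⟩ := isOfFinOrder_iff_zpow_eq_one.mp hfin
    exact hord n hn hpow
  have habs : ∀ {m n : ℤ}, (∃ u : G, h ^ m = u * ω * u⁻¹) → (∃ u : G, h ^ n = u * ω * u⁻¹) →
      |m| = |n| := by
    rintro m n ⟨u, hu⟩ ⟨v, hv⟩
    have hm : IsConj ω (h ^ m) := isConj_iff.mpr ⟨u, hu.symm⟩
    have hn : IsConj ω (h ^ n) := isConj_iff.mpr ⟨v, hv.symm⟩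
    exact abs_eq_abs_of_isConj_zpow (hf h hinf) (hm.symm.trans hn)
  have h₁₂ := abs_eq_abs.mp (habs h₁ h₂)
  have h₁₃ := abs_eq_abs.mp (habs h₁ h₃)
  omega
end
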